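/- (Distinctness of the harmonic highways) Let k > 1 and let i, j satisfy 0 < i < k, 0 < j < k and i ≠ j. Let s^i and s^j be the trace sequences of the ant L^{2k}R started from (C_{k,i}^{0}, (0,0), (0,1)) and from (C_{k,j}^{0}, (0,0), (0,1)) respectively. Then the 4-letter word (i+1)(i−1)(i)(0) occurs as a consecutive factor in the sequence s^i but does not occur as a consecutive factor in the sequence s^j; in particular the k−1 harmonic highways are pairwise distinct. -/

import Mathlib

/-- Cells of the grid `ℤ²`. -/
abbrev Cell : Type := ℤ × ℤ

/-- The four unit directions of `ℤ²` (the state set `Q`). -/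
inductive Dir : Type
  | E | N | W | S
deriving DecidableEq

/-- Rotation by 90° counterclockwise. -/
def Dir.left : Dir → Dir
  | .E => .N | .N => .W | .W => .S | .S => .E

/-- Rotation by 90° clockwise. -/
def Dir.right : Dir → Dir
  | .E => .S | .S => .W | .W => .N | .N => .E

/-- The unit vector of a direction. -/
def Dir.vec : Dir → Cell
  | .E => (1, 0) | .N => (0, 1) | .W => (-1, 0) | .S => (0, -1)

/-- Configurations: a picture `ℤ² → ℤ/nℤ`, a position and a direction. -/
abbrev Config (n : ℕ) : Type := (Cell → ZMod n) × Cell × Dir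

/-- One step of the generalised ant whose rule word over the alphabet `ℤ/nℤ` is
described by `isL : ZMod n → Bool` (`isL a = true` iff the ant turns left on symbol
`a`): the symbol under the ant is increased by `1 (mod n)`, the ant turns left
(counterclockwise) or right (clockwise), and moves one step in its new direction. -/
def antStep (n : ℕ) (isL : ZMod n → Bool) (cfg : Config n) : Config n :=
  let C := cfg.1
  let p := cfg.2.1
  let d' := if isL (C p) then cfg.2.2.left else cfg.2.2.right
  (Function.update C p (C p + 1), p + d'.vec, d')

/-- The rule word `L^{2k}R`: the ant turns left on symbols `0, …, 2k−1` and right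
on symbol `2k` (alphabet `ℤ/(2k+1)ℤ`). -/
def isL2kR (k : ℕ) : ZMod (2 * k + 1) → Bool := fun a => decide (a.val < 2 * k)

/-- The picture `C_{k,i}^{n} : ℤ² → ℤ/(2k+1)ℤ`. -/
def pic (k : ℕ) (i : ZMod (2 * k + 1)) (n : ℕ) : Cell → ZMod (2 * k + 1) := fun q =>
  if q.2 = (n : ℤ) ∧ (q.1 = 1 - (n : ℤ) ∨ q.1 = 2 - (n : ℤ)) then i
  else if q.1 = 1 - (n : ℤ) ∧ q.2 = (n : ℤ) - 1 then i + 1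
  else if q.1 = 2 - (n : ℤ) ∧ q.2 = (n : ℤ) - 1 then i - 1
  else if q.2 = -q.1 - 2 ∧ -(n : ℤ) ≤ q.1 ∧ q.1 ≤ -1 then ((2 * k : ℕ) : ZMod (2 * k + 1))
  else if q.2 = -q.1 + 2 ∧ 2 ≤ q.1 ∧ q.1 ≤ (n : ℤ) + 1 then ((2 * k : ℕ) : ZMod (2 * k + 1)) - 1
  else if q.2 = -q.1 + 1 ∧ 2 ≤ q.1 ∧ q.1 ≤ (n : ℤ) + 1 then ((2 * k : ℕ) : ZMod (2 * k + 1)) - 2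
  else 0

/-- The trace of the ant `L^{2k}R` started from `(C_{k,i}^{0}, (0,0), ↑)`:
`trace k i t` is the symbol read at time `t`. -/
def trace (k : ℕ) (i : ZMod (2 * k + 1)) (t : ℕ) : ZMod (2 * k + 1) :=
  ((antStep (2 * k + 1) (isL2kR k))^[t] (pic k i 0, ((0, 0) : Cell), Dir.N)).1
    ((antStep (2 * k + 1) (isL2kR k))^[t] (pic k i 0, ((0, 0) : Cell), Dir.N)).2.1

namespace AntAux

abbrev Al (k : ℕ) : Type := ZMod (2 * k + 1)

abbrev stp (k : ℕ) : Config (2 * k + 1) → Config (2 * k + 1) :=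
  antStep (2 * k + 1) (isL2kR k)

theorem cast_zero_iff {k v : ℕ} (h : v ≤ 2 * k) : ((v : ℕ) : Al k) = 0 ↔ v = 0 := by
  rw [ZMod.natCast_eq_zero_iff]
  constructor
  · intro hd
    exact Nat.eq_zero_of_dvd_of_lt hd (by omega)
  · rintro rfl; exact dvd_zero _

theorem cast_inj {k v w : ℕ} (h : v ≤ 2 * k) (h' : w ≤ 2 * k) (e : (v : Al k) = (w : Al k)) :
    v = w := by
  have := congrArg ZMod.val e
  rwa [ZMod.val_natCast_of_lt (by omega), ZMod.val_natCast_of_lt (by omega)] at this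

/-- Closure of predicates under the ant step. -/
def Cl (k : ℕ) (S : Al k → Al k → Prop)
    (P' P : Al k → Al k → Config (2 * k + 1) → Prop) : Prop :=
  ∀ a b c, (c.1 c.2.1 = 0 → S a b) → P b (c.1 c.2.1) (stp k c) → P' a b c

variable {k : ℕ} {S : Al k → Al k → Prop} {P' P : Al k → Al k → Config (2 * k + 1) → Prop}

theorem stepL (hP : Cl k S P' P) (C : Cell → Al k) (p : Cell) (d : Dir) (v : ℕ) (a b : Al k)
    (hv : C p = (v : Al k)) (hlt : v < 2 * k) (hs : v = 0 → S a b)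
    (hn : ∀ C' : Cell → Al k, C' p = ((v + 1 : ℕ) : Al k) → (∀ q, q ≠ p → C' q = C q) →
      P b v (C', p + d.left.vec, d.left)) : P' a b (C, p, d) := by
  apply hP
  · simp only [hv]
    intro h
    exact hs ((cast_zero_iff hlt.le).1 h)
  · have e : stp k (C, p, d) = (Function.update C p (C p + 1), p + d.left.vec, d.left) := by
      have : isL2kR k (C p) = true := by
        rw [hv]
        simp only [isL2kR, decide_eq_true_eq]
        rw [ZMod.val_natCast_of_lt (by omega)]
        exact hlt
      simp [stp, antStep, this]
    rw [e]
    simp only [hv]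
    apply hn
    · simp
    · intro q hq
      simp [Function.update_of_ne hq]

theorem stepR (hk : 0 < k) (hP : Cl k S P' P) (C : Cell → Al k) (p : Cell) (d : Dir) (a b : Al k)
    (hv : C p = ((2 * k : ℕ) : Al k))
    (hn : ∀ C' : Cell → Al k, C' p = 0 → (∀ q, q ≠ p → C' q = C q) →
      P b ((2 * k : ℕ) : Al k) (C', p + d.right.vec, d.right)) : P' a b (C, p, d) := by
  apply hP
  · simp only [hv]
    intro h
    have := (cast_zero_iff (le_refl _)).1 h
    omega
  · have e : stp k (C, p, d) = (Function.update C p (C p + 1), p + d.right.vec, d.right) := by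
      have : isL2kR k (C p) = false := by
        rw [hv]
        simp only [isL2kR, decide_eq_false_iff_not]
        rw [ZMod.val_natCast_of_lt (by omega)]
        omega
      simp [stp, antStep, this]
    rw [e]
    simp only [hv]
    apply hn
    · have : ((2 * k + 1 : ℕ) : Al k) = 0 := ZMod.natCast_self _
      rw [Function.update_self]
      exact_mod_cast this
    · intro q hq
      simp [Function.update_of_ne hq]

theorem round (hP' : Cl k S P' P) (hP : Cl k S P P) (C : Cell → Al k) (p q1 q2 q3 : Cell) (d : Dir)
    (a0 a1 a2 a3 : ℕ) (a b : Al k)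
    (e1 : q1 = p + d.left.vec) (e2 : q2 = q1 + d.left.left.vec) (e3 : q3 = q2 + d.right.vec)
    (h0 : C p = (a0 : Al k)) (h1 : C q1 = (a1 : Al k)) (h2 : C q2 = (a2 : Al k))
    (h3 : C q3 = (a3 : Al k))
    (l0 : a0 < 2 * k) (l1 : a1 < 2 * k) (l2 : a2 < 2 * k) (l3 : a3 < 2 * k)
    (s0 : a0 = 0 → S a b) (s1 : a1 = 0 → S b a0) (s2 : a2 = 0 → S a0 a1) (s3 : a3 = 0 → S a1 a2)
    (hn : ∀ C' : Cell → Al k, C' p = ((a0 + 1 : ℕ) : Al k) → C' q1 = ((a1 + 1 : ℕ) : Al k) →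
      C' q2 = ((a2 + 1 : ℕ) : Al k) → C' q3 = ((a3 + 1 : ℕ) : Al k) →
      (∀ q, q ≠ p → q ≠ q1 → q ≠ q2 → q ≠ q3 → C' q = C q) →
      P a2 a3 (C', p, d)) : P' a b (C, p, d) := by
  have n10 : q1 ≠ p := by subst e1; cases d <;> simp [Dir.left, Dir.vec]
  have n20 : q2 ≠ p := by
    subst e1 e2; cases d <;> simp [Dir.left, Dir.vec, Prod.ext_iff, add_assoc]
  have n21 : q2 ≠ q1 := by subst e1 e2; cases d <;> simp [Dir.left, Dir.vec]
  have n30 : q3 ≠ p := by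
    subst e1 e2 e3; cases d <;> simp [Dir.left, Dir.right, Dir.vec, Prod.ext_iff, add_assoc]
  have n31 : q3 ≠ q1 := by
    subst e1 e2 e3; cases d <;> simp [Dir.left, Dir.right, Dir.vec, Prod.ext_iff, add_assoc]
  have n32 : q3 ≠ q2 := by subst e1 e2 e3; cases d <;> simp [Dir.left, Dir.right, Dir.vec]
  have d3 : d.left.left.left = d.right := by cases d <;> rfl
  have d4 : d.left.left.left.left = d := by cases d <;> rfl
  have e4 : q3 + d.vec = p := by
    subst e1 e2 e3
    obtain ⟨x, y⟩ := p
    cases d <;> simp [Dir.left, Dir.right, Dir.vec]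
  refine stepL hP' C p d a0 a b h0 l0 s0 ?_
  intro C1 u1 f1
  rw [← e1]
  refine stepL hP C1 q1 _ a1 _ _ (by rw [f1 _ n10, h1]) l1 s1 ?_
  intro C2 u2 f2
  rw [← e2]
  refine stepL hP C2 q2 _ a2 _ _ (by rw [f2 _ n21, f1 _ n20, h2]) l2 s2 ?_
  intro C3 u3 f3
  rw [d3, ← e3]
  refine stepL hP C3 q3 _ a3 _ _ (by rw [f3 _ n32, f2 _ n31, f1 _ n30, h3]) l3 s3 ?_
  intro C4 u4 f4
  rw [← d3, d4, e4]
  apply hn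
  · rw [f4 _ n30.symm, f3 _ n20.symm, f2 _ n10.symm, u1]
  · rw [f4 _ n31.symm, f3 _ n21.symm, u2]
  · rw [f4 _ n32.symm, u3]
  · exact u4
  · intro q k0 k1 k2 k3
    rw [f4 _ k3, f3 _ k2, f2 _ k1, f1 _ k0]

theorem rounds (hP : Cl k S P P) (p q1 q2 q3 : Cell) (d : Dir)
    (e1 : q1 = p + d.left.vec) (e2 : q2 = q1 + d.left.left.vec) (e3 : q3 = q2 + d.right.vec)
    (m : ℕ) : ∀ (C : Cell → Al k)
    (a0 a1 a2 a3 : ℕ) (a b : Al k)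
    (_ : C p = (a0 : Al k)) (_ : C q1 = (a1 : Al k)) (_ : C q2 = (a2 : Al k))
    (_ : C q3 = (a3 : Al k))
    (_ : a0 + m ≤ 2 * k) (_ : a1 + m ≤ 2 * k) (_ : a2 + m ≤ 2 * k) (_ : a3 + m ≤ 2 * k)
    (_ : 0 < a0) (_ : 0 < a1) (_ : 0 < a2) (_ : 0 < a3)
    (_ : ∀ (C' : Cell → Al k) (a b : Al k), C' p = ((a0 + m : ℕ) : Al k) →
      C' q1 = ((a1 + m : ℕ) : Al k) →
      C' q2 = ((a2 + m : ℕ) : Al k) → C' q3 = ((a3 + m : ℕ) : Al k) →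
      (∀ q, q ≠ p → q ≠ q1 → q ≠ q2 → q ≠ q3 → C' q = C q) →
      P a b (C', p, d)), P a b (C, p, d) := by
  induction m with
  | zero =>
    intro C a0 a1 a2 a3 a b h0 h1 h2 h3 _ _ _ _ _ _ _ _ hn
    exact hn C a b h0 h1 h2 h3 (fun _ _ _ _ _ => rfl)
  | succ m ih =>
    intro C a0 a1 a2 a3 a b h0 h1 h2 h3 l0 l1 l2 l3 z0 z1 z2 z3 hn
    refine round hP hP C p q1 q2 q3 d a0 a1 a2 a3 a b e1 e2 e3 h0 h1 h2 h3 (by omega) (by omega)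
      (by omega) (by omega) (by omega) (by omega) (by omega) (by omega) ?_
    intro C1 u0 u1 u2 u3 f
    refine ih C1 _ _ _ _ _ _ u0 u1 u2 u3 (by omega) (by omega) (by omega) (by omega)
      (by omega) (by omega) (by omega) (by omega) ?_
    intro C2 a b w0 w1 w2 w3 g
    refine hn C2 a b ?_ ?_ ?_ ?_ ?_
    · rw [w0]; congr 1; omega
    · rw [w1]; congr 1; omega
    · rw [w2]; congr 1; omega
    · rw [w3]; congr 1; omega
    · intro q k0 k1 k2 k3
      rw [g q k0 k1 k2 k3, f q k0 k1 k2 k3]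

/-- Picture invariant at the beginning of each half-period. -/
structure Inv (k i : ℕ) (x y : ℤ) (C : Cell → Al k) : Prop where
  fresh : ∀ u v : ℤ, y - x ≤ v - u → C (u, v) = 0
  c0 : C (x, y - 1) = 0
  c1 : C (x + 1, y) = (i : Al k)
  c2 : C (x + 2, y) = (i : Al k)
  c3 : C (x + 1, y - 1) = ((i + 1 : ℕ) : Al k)
  c4 : C (x + 2, y - 1) = ((i - 1 : ℕ) : Al k)

/-- Picture invariant at the beginning of the third block. -/
structure Mid (k i : ℕ) (x y : ℤ) (C : Cell → Al k) : Prop where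
  fresh : ∀ u v : ℤ, y - x + 2 ≤ v - u → C (u, v) = 0
  c0 : C (x + 1, y - 1) = ((i + 1 : ℕ) : Al k)
  c1 : C (x + 2, y - 1) = ((i - 1 : ℕ) : Al k)
  c2 : C (x + 2, y) = (i : Al k)
  c3 : C (x + 1, y) = 0
  c4 : C (x, y - 1) = ((2 * k : ℕ) : Al k)
  c5 : C (x, y) = ((2 * k - i : ℕ) : Al k)
  c6 : C (x - 1, y) = ((2 * k : ℕ) : Al k)
  c7 : C (x, y + 1) = ((2 * k - i : ℕ) : Al k)
  c8 : C (x + 1, y + 1) = ((2 * k - i : ℕ) : Al k)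

theorem phaseA (hk : 1 < k) (i : ℕ) (hi : 0 < i) (hi' : i < 2 * k)
    (hP' : Cl k S P' P) (hP : Cl k S P P)
    (S0 : ∀ a, S a 0) (S1 : ∀ a, S a ((2 * k : ℕ) : Al k)) (S2 : ∀ a, S a (i : Al k))
    (x y : ℤ) (C : Cell → Al k) (hC : Inv k i x y C) (a : Al k)
    (hn : ∀ (C' : Cell → Al k) (a : Al k), Mid k i x y C' →
      P a ((2 * k : ℕ) : Al k) (C', (x + 1, y - 1), Dir.S)) :
    P' a ((2 * k : ℕ) : Al k) (C, (x, y), Dir.N) := by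
  refine round hP' hP C (x, y) (x - 1, y) (x - 1, y - 1) (x, y - 1) Dir.N 0 0 0 0 _ _
    (by simp [Dir.left, Dir.vec]; try omega) (by simp [Dir.left, Dir.vec]; try omega)
    (by simp [Dir.right, Dir.vec])
    (by rw [hC.fresh _ _ (by omega)]; simp) (by rw [hC.fresh _ _ (by omega)]; simp)
    (by rw [hC.fresh _ _ (by omega)]; simp) (by rw [hC.c0]; simp)
    (by omega) (by omega) (by omega) (by omega)
    (fun _ => S1 _) (fun _ => by simpa using S0 _) (fun _ => by simpa using S0 _)
    (fun _ => by simpa using S0 _) ?_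
  intro C1 u0 u1 u2 u3 f1
  refine rounds hP (x, y) (x - 1, y) (x - 1, y - 1) (x, y - 1) Dir.N 
    (by simp [Dir.left, Dir.vec]; try omega) (by simp [Dir.left, Dir.vec]; try omega)
    (by simp [Dir.right, Dir.vec]) (2 * k - 1) C1 _ _ _ _ _ _ u0 u1 u2 u3
    (by omega) (by omega) (by omega) (by omega) (by omega) (by omega) (by omega) (by omega) ?_
  clear u0 u1 u2 u3
  intro C2 a b u0 u1 u2 u3 f2
  have ek : 0 + 1 + (2 * k - 1) = 2 * k := by omega
  rw [ek] at u0 u1 u2 u3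
  have F2 : ∀ q, q ≠ (x, y) → q ≠ (x - 1, y) → q ≠ (x - 1, y - 1) → q ≠ (x, y - 1) →
      C2 q = C q := fun q h0 h1 h2 h3 => by rw [f2 q h0 h1 h2 h3, f1 q h0 h1 h2 h3]
  clear f1 f2 C1
  refine stepR (by omega) hP C2 _ _ _ _ u0 ?_
  intro C3 v0 f3
  have ep : ((x, y) : Cell) + Dir.N.right.vec = (x + 1, y) := by simp [Dir.right, Dir.vec]
  rw [ep]
  refine round hP hP C3 (x + 1, y) (x + 1, y + 1) (x, y + 1) (x, y) Dir.E i 0 0 0 _ _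
    (by simp [Dir.left, Dir.vec]; try omega) (by simp [Dir.left, Dir.vec]; try omega)
    (by simp [Dir.right, Dir.vec])
    (by rw [f3 _ (by rw [Ne, Prod.mk.injEq]; omega), F2 _ (by rw [Ne, Prod.mk.injEq]; omega) (by rw [Ne, Prod.mk.injEq]; omega) (by rw [Ne, Prod.mk.injEq]; omega) (by rw [Ne, Prod.mk.injEq]; omega), hC.c1])
    (by rw [f3 _ (by rw [Ne, Prod.mk.injEq]; omega), F2 _ (by rw [Ne, Prod.mk.injEq]; omega) (by rw [Ne, Prod.mk.injEq]; omega) (by rw [Ne, Prod.mk.injEq]; omega) (by rw [Ne, Prod.mk.injEq]; omega), hC.fresh _ _ (by omega)]; simp)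
    (by rw [f3 _ (by rw [Ne, Prod.mk.injEq]; omega), F2 _ (by rw [Ne, Prod.mk.injEq]; omega) (by rw [Ne, Prod.mk.injEq]; omega) (by rw [Ne, Prod.mk.injEq]; omega) (by rw [Ne, Prod.mk.injEq]; omega), hC.fresh _ _ (by omega)]; simp)
    (by rw [v0]; simp)
    (by omega) (by omega) (by omega) (by omega)
    (by omega) (fun _ => S2 _) (fun _ => by simpa using S0 _) (fun _ => by simpa using S0 _) ?_
  intro C4 w0 w1 w2 w3 f4
  refine rounds hP (x + 1, y) (x + 1, y + 1) (x, y + 1) (x, y) Dir.E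
    (by simp [Dir.left, Dir.vec]; try omega) (by simp [Dir.left, Dir.vec]; try omega)
    (by simp [Dir.right, Dir.vec]) (2 * k - i - 1) C4 _ _ _ _ _ _ w0 w1 w2 w3
    (by omega) (by omega) (by omega) (by omega) (by omega) (by omega) (by omega) (by omega) ?_
  clear w0 w1 w2 w3
  intro C5 a b w0 w1 w2 w3 f5
  have ek0 : i + 1 + (2 * k - i - 1) = 2 * k := by omega
  have ek1 : 0 + 1 + (2 * k - i - 1) = 2 * k - i := by omega
  rw [ek0] at w0
  rw [ek1] at w1 w2 w3
  refine stepR (by omega) hP C5 _ _ _ _ w0 ?_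
  intro C6 z0 f6
  have ep : ((x + 1, y) : Cell) + Dir.E.right.vec = (x + 1, y - 1) := by
    simp [Dir.right, Dir.vec]; try omega
  rw [ep]
  have F6 : ∀ q, q ≠ (x + 1, y) → q ≠ (x + 1, y + 1) → q ≠ (x, y + 1) → q ≠ (x, y) →
      C6 q = C2 q := fun q h0 h1 h2 h3 => by
    rw [f6 q h0, f5 q h0 h1 h2 h3, f4 q h0 h1 h2 h3, f3 q h3]
  have F6' : ∀ q, q ≠ (x + 1, y) → q ≠ (x + 1, y + 1) → q ≠ (x, y + 1) → q ≠ (x, y) →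
      q ≠ (x - 1, y) → q ≠ (x - 1, y - 1) → q ≠ (x, y - 1) →
      C6 q = C q := fun q h0 h1 h2 h3 h4 h5 h6 => by
    rw [F6 q h0 h1 h2 h3, F2 q h3 h4 h5 h6]
  apply hn
  refine ⟨?_, ?_, ?_, ?_, ?_, ?_, ?_, ?_, ?_, ?_⟩
  · intro u v huv
    rw [F6', hC.fresh _ _ (by omega)]
    all_goals (rw [Ne, Prod.mk.injEq]; omega)
  · rw [F6', hC.c3]
    all_goals (rw [Ne, Prod.mk.injEq]; omega)
  · rw [F6', hC.c4]
    all_goals (rw [Ne, Prod.mk.injEq]; omega)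
  · rw [F6', hC.c2]
    all_goals (rw [Ne, Prod.mk.injEq]; omega)
  · exact z0
  · rw [F6, u3]
    all_goals (rw [Ne, Prod.mk.injEq]; omega)
  · rw [f6, w3]
    all_goals (rw [Ne, Prod.mk.injEq]; omega)
  · rw [F6, u1]
    all_goals (rw [Ne, Prod.mk.injEq]; omega)
  · rw [f6, w2]
    all_goals (rw [Ne, Prod.mk.injEq]; omega)
  · rw [f6, w1]
    all_goals (rw [Ne, Prod.mk.injEq]; omega)

theorem phaseB2 (hk : 1 < k) (i : ℕ) (hi : 0 < i) (hi' : i < 2 * k)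
    (hP : Cl k S P P)
    (x y : ℤ) (C : Cell → Al k) (a b : Al k)
    (fresh : ∀ u v : ℤ, y - x + 2 ≤ v - u → C (u, v) = 0)
    (c0 : C (x + 1, y - 1) = ((2 * k : ℕ) : Al k))
    (c3 : C (x + 1, y) = ((2 * k - i - 1 : ℕ) : Al k))
    (c4 : C (x, y - 1) = ((2 * k : ℕ) : Al k))
    (c5 : C (x, y) = ((2 * k - i : ℕ) : Al k))
    (c6 : C (x - 1, y) = ((2 * k : ℕ) : Al k))
    (c7 : C (x, y + 1) = ((2 * k - i : ℕ) : Al k))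
    (c8 : C (x + 1, y + 1) = ((2 * k - i : ℕ) : Al k))
    (hn : ∀ (C' : Cell → Al k) (a : Al k), Inv k (2 * k - i) (x - 1) (y + 1) C' →
      P a ((2 * k : ℕ) : Al k) (C', (x - 1, y + 1), Dir.N)) :
    P a b (C, (x + 1, y - 1), Dir.S) := by
  refine stepR (by omega) hP C _ _ _ _ c0 ?_
  intro C1 u1 f1
  have ep : ((x + 1, y - 1) : Cell) + Dir.S.right.vec = (x, y - 1) := by
    simp [Dir.right, Dir.vec]
  rw [ep]
  refine stepR (by omega) hP C1 _ _ _ _ (by rw [f1 _ (by rw [Ne, Prod.mk.injEq]; omega), c4]) ?_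
  intro C2 u2 f2
  have ep : ((x, y - 1) : Cell) + Dir.S.right.right.vec = (x, y) := by
    simp [Dir.right, Dir.vec]
  rw [ep]
  refine stepL hP C2 _ _ (2 * k - i) _ _ (by rw [f2 _ (by rw [Ne, Prod.mk.injEq]; omega), f1 _ (by rw [Ne, Prod.mk.injEq]; omega), c5])
    (by omega) (by omega) ?_
  intro C3 u3 f3
  have ep : ((x, y) : Cell) + Dir.S.right.right.left.vec = (x - 1, y) := by
    simp [Dir.right, Dir.left, Dir.vec]; try omega
  rw [ep]
  refine stepR (by omega) hP C3 _ _ _ _ (by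
    rw [f3 _ (by rw [Ne, Prod.mk.injEq]; omega), f2 _ (by rw [Ne, Prod.mk.injEq]; omega), f1 _ (by rw [Ne, Prod.mk.injEq]; omega), c6]) ?_
  intro C4 u4 f4
  have ep : ((x - 1, y) : Cell) + Dir.S.right.right.left.right.vec = (x - 1, y + 1) := by
    simp [Dir.right, Dir.left, Dir.vec]
  rw [ep]
  have F4 : ∀ q, q ≠ (x + 1, y - 1) → q ≠ (x, y - 1) → q ≠ (x, y) → q ≠ (x - 1, y) →
      C4 q = C q := fun q h0 h1 h2 h3 => by
    rw [f4 q h3, f3 q h2, f2 q h1, f1 q h0]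
  apply hn
  have x1 : x - 1 + 1 = x := by ring
  have x2 : x - 1 + 2 = x + 1 := by ring
  have y1 : y + 1 - 1 = y := by ring
  refine ⟨?_, ?_, ?_, ?_, ?_, ?_⟩
  · intro u v huv
    rw [F4, fresh _ _ (by omega)]
    all_goals (rw [Ne, Prod.mk.injEq]; omega)
  · rw [y1, u4]
  · rw [x1, F4, c7]
    all_goals (rw [Ne, Prod.mk.injEq]; omega)
  · rw [x2, F4, c8]
    all_goals (rw [Ne, Prod.mk.injEq]; omega)
  · rw [x1, y1, f4, u3]
    all_goals (rw [Ne, Prod.mk.injEq]; omega)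
  · rw [x2, y1, F4, c3]
    all_goals (rw [Ne, Prod.mk.injEq]; omega)

theorem phaseB (hk : 1 < k) (i : ℕ) (hi : 0 < i) (hi' : i < 2 * k)
    (hP : Cl k S P P) (S2 : ∀ a, S a (i : Al k)) (S3 : ∀ b, S ((2 * k : ℕ) : Al k) b)
    (x y : ℤ) (C : Cell → Al k) (hC : Mid k i x y C) (a : Al k)
    (hn : ∀ (C' : Cell → Al k) (a : Al k), Inv k (2 * k - i) (x - 1) (y + 1) C' →
      P a ((2 * k : ℕ) : Al k) (C', (x - 1, y + 1), Dir.N)) :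
    P a ((2 * k : ℕ) : Al k) (C, (x + 1, y - 1), Dir.S) := by
  rcases Nat.lt_or_ge (i + 1) (2 * k) with h | h
  · refine round hP hP C (x + 1, y - 1) (x + 2, y - 1) (x + 2, y) (x + 1, y) Dir.S
      (i + 1) (i - 1) i 0 _ _
      (by simp [Dir.left, Dir.vec]; try omega) (by simp [Dir.left, Dir.vec])
      (by simp [Dir.right, Dir.vec]; try omega)
      hC.c0 hC.c1 hC.c2 (by rw [hC.c3]; simp)
      (by omega) (by omega) (by omega) (by omega)
      (by omega) (fun _ => S3 _) (by omega) (fun _ => S2 _) ?_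
    intro C4 w0 w1 w2 w3 f4
    refine rounds hP (x + 1, y - 1) (x + 2, y - 1) (x + 2, y) (x + 1, y) Dir.S
      (by simp [Dir.left, Dir.vec]; try omega) (by simp [Dir.left, Dir.vec])
      (by simp [Dir.right, Dir.vec]; try omega) (2 * k - i - 2) C4 _ _ _ _ _ _ w0 w1 w2 w3
      (by omega) (by omega) (by omega) (by omega) (by omega) (by omega) (by omega) (by omega) ?_
    clear w0 w1 w2 w3
    intro C5 a b w0 w1 w2 w3 f5
    have ek0 : i + 1 + 1 + (2 * k - i - 2) = 2 * k := by omega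
    have ek3 : 0 + 1 + (2 * k - i - 2) = 2 * k - i - 1 := by omega
    rw [ek0] at w0
    rw [ek3] at w3
    have F : ∀ q, q ≠ (x + 1, y - 1) → q ≠ (x + 2, y - 1) → q ≠ (x + 2, y) → q ≠ (x + 1, y) →
        C5 q = C q := fun q h0 h1 h2 h3 => by
      rw [f5 q h0 h1 h2 h3, f4 q h0 h1 h2 h3]
    refine phaseB2 hk i hi hi' hP x y C5 a b ?_ w0 w3 ?_ ?_ ?_ ?_ ?_ hn
    · intro u v huv
      rw [F, hC.fresh _ _ (by omega)]
      all_goals (rw [Ne, Prod.mk.injEq]; omega)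
    · rw [F, hC.c4]
      all_goals (rw [Ne, Prod.mk.injEq]; omega)
    · rw [F, hC.c5]
      all_goals (rw [Ne, Prod.mk.injEq]; omega)
    · rw [F, hC.c6]
      all_goals (rw [Ne, Prod.mk.injEq]; omega)
    · rw [F, hC.c7]
      all_goals (rw [Ne, Prod.mk.injEq]; omega)
    · rw [F, hC.c8]
      all_goals (rw [Ne, Prod.mk.injEq]; omega)
  · have e : i + 1 = 2 * k := by omega
    have e' : 2 * k - i - 1 = 0 := by omega
    refine phaseB2 hk i hi hi' hP x y C _ _ hC.fresh (by rw [hC.c0, e]) (by rw [hC.c3, e']; simp)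
      hC.c4 hC.c5 hC.c6 hC.c7 hC.c8 hn

/-- Safety for the first `N` steps. -/
def Saf (k : ℕ) (S : Al k → Al k → Prop) : ℕ → Al k → Al k → Config (2 * k + 1) → Prop
  | 0, _, _, _ => True
  | N + 1, a, b, c => (c.1 c.2.1 = 0 → S a b) ∧ Saf k S N b (c.1 c.2.1) (stp k c)

theorem Saf.mono (N : ℕ) : ∀ (a b : Al k) (c : Config (2 * k + 1)),
    Saf k S (N + 1) a b c → Saf k S N a b c := by
  induction N with
  | zero => intros; trivial
  | succ N ih => intro a b c h; exact ⟨h.1, ih _ _ _ h.2⟩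

theorem Saf.cl' (N : ℕ) : Cl k S (Saf k S (N + 1)) (Saf k S N) :=
  fun _ _ _ h1 h2 => ⟨h1, h2⟩

theorem Saf.cl (N : ℕ) : Cl k S (Saf k S N) (Saf k S N) :=
  fun _ _ _ h1 h2 => Saf.mono _ _ _ _ ⟨h1, h2⟩

def rd (c : Config (2 * k + 1)) : Al k := c.1 c.2.1

theorem Saf.out (t : ℕ) : ∀ (a b : Al k) (c : Config (2 * k + 1)), Saf k S (t + 3) a b c →
    rd ((stp k)^[t + 2] c) = 0 → S (rd ((stp k)^[t] c)) (rd ((stp k)^[t + 1] c)) := by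
  induction t with
  | zero => intro a b c h h0; exact h.2.2.1 h0
  | succ t ih => intro a b c h h0; exact ih _ _ _ h.2 h0

theorem safe_all (hk : 1 < k) (j : ℕ) (hj : 0 < j) (hj' : j < 2 * k)
    (S0 : ∀ a, S a 0) (S1 : ∀ a, S a ((2 * k : ℕ) : Al k)) (S2 : ∀ a, S a (j : Al k))
    (S2' : ∀ a, S a ((2 * k - j : ℕ) : Al k))
    (S3 : ∀ b, S ((2 * k : ℕ) : Al k) b) (N : ℕ) :
    ∀ (i : ℕ) (x y : ℤ) (C : Cell → Al k) (a : Al k), (i = j ∨ i = 2 * k - j) → Inv k i x y C →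
      Saf k S N a ((2 * k : ℕ) : Al k) (C, (x, y), Dir.N) := by
  induction N with
  | zero => intros; trivial
  | succ N ih =>
    intro i x y C a hi hC
    have T : ∀ a, S a (i : Al k) := by
      rcases hi with rfl | rfl
      · exact S2
      · exact S2'
    refine phaseA hk i (by omega) (by omega) (Saf.cl' N) (Saf.cl N) S0 S1 T x y C hC a ?_
    intro C' a hC'
    refine phaseB hk i (by omega) (by omega) (Saf.cl N) T S3 x y C' hC' a ?_
    intro C'' a hC''
    exact ih _ _ _ _ _ (by omega) hC''

theorem init_inv (i : ℕ) (hi : 0 < i) : Inv k i 0 0 (pic k (i : Al k) 0) := by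
  refine ⟨?_, ?_, ?_, ?_, ?_, ?_⟩
  · intro u v h
    simp only [pic, Nat.cast_zero]
    repeat rw [if_neg (by omega)]
  · simp [pic]
  · simp [pic]
  · simp [pic]
  · simp [pic]
  · simp [pic, Nat.cast_sub (show 1 ≤ i from hi)]

/-- The word occurs at some time. -/
def Ev (k i : ℕ) (_ _ : Al k) (c : Config (2 * k + 1)) : Prop :=
  ∃ t, rd ((stp k)^[t] c) = ((i + 1 : ℕ) : Al k) ∧
    rd ((stp k)^[t + 1] c) = ((i - 1 : ℕ) : Al k) ∧
    rd ((stp k)^[t + 2] c) = (i : Al k) ∧ rd ((stp k)^[t + 3] c) = 0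

theorem Ev.cl (i : ℕ) : Cl k (fun _ _ => True) (Ev k i) (Ev k i) := by
  rintro a b c - ⟨t, h⟩
  exact ⟨t + 1, h⟩

theorem stp_left (C : Cell → Al k) (p p' : Cell) (d : Dir) (v : ℕ)
    (hv : C p = (v : Al k)) (hlt : v < 2 * k) (hp : p' = p + d.left.vec) :
    stp k (C, p, d) = (Function.update C p (C p + 1), p', d.left) := by
  have : isL2kR k (C p) = true := by
    rw [hv]
    simp only [isL2kR, decide_eq_true_eq]
    rw [ZMod.val_natCast_of_lt (by omega)]
    exact hlt
  simp [stp, antStep, this, hp]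

theorem ev_mid (i : ℕ) (hi : 0 < i) (hik : i < k) (x y : ℤ) (C : Cell → Al k)
    (hC : Mid k i x y C) (a b : Al k) : Ev k i a b (C, (x + 1, y - 1), Dir.S) := by
  refine ⟨0, ?_⟩
  have ny : ¬ y = y - 1 := by omega
  simp only [Function.iterate_succ, Function.iterate_zero, Function.comp, id, zero_add]
  rw [stp_left C _ (x + 2, y - 1) _ _ hC.c0 (by omega)
    (by simp [Dir.left, Dir.vec]; try omega)]
  rw [stp_left _ _ (x + 2, y) _ (i - 1) (by simp [hC.c1]) (by omega)
    (by simp [Dir.left, Dir.vec])]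
  rw [stp_left _ _ (x + 1, y) _ i (by simp [ny, hC.c2]) (by omega)
    (by simp [Dir.left, Dir.vec]; try omega)]
  refine ⟨hC.c0, ?_, ?_, ?_⟩ <;> simp [rd, ny, hC.c1, hC.c2, hC.c3]

end AntAux

/-- distinctness of the harmonic highways. For `k > 1` and
`0 < i, j < k` with `i ≠ j`, the 4-letter word `(i+1)(i−1)(i)(0)` occurs as a
consecutive factor of the trace of the highway started from `(C_{k,i}^{0},(0,0),↑)`
but not of the one started from `(C_{k,j}^{0},(0,0),↑)`; in particular the `k−1`
harmonic highways are pairwise distinct. -/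
theorem l2kr_harmonic_highways_distinct (k i j : ℕ) (hk : 1 < k)
    (hi0 : 0 < i) (hik : i < k) (hj0 : 0 < j) (hjk : j < k) (hij : i ≠ j) :
    (∃ t : ℕ,
      trace k (i : ZMod (2 * k + 1)) t = (i : ZMod (2 * k + 1)) + 1 ∧
      trace k (i : ZMod (2 * k + 1)) (t + 1) = (i : ZMod (2 * k + 1)) - 1 ∧
      trace k (i : ZMod (2 * k + 1)) (t + 2) = (i : ZMod (2 * k + 1)) ∧
      trace k (i : ZMod (2 * k + 1)) (t + 3) = 0) ∧
    ¬ (∃ t : ℕ,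
      trace k (j : ZMod (2 * k + 1)) t = (i : ZMod (2 * k + 1)) + 1 ∧
      trace k (j : ZMod (2 * k + 1)) (t + 1) = (i : ZMod (2 * k + 1)) - 1 ∧
      trace k (j : ZMod (2 * k + 1)) (t + 2) = (i : ZMod (2 * k + 1)) ∧
      trace k (j : ZMod (2 * k + 1)) (t + 3) = 0) := by
  refine ⟨?_, ?_⟩
  · have h : AntAux.Ev k i 0 ((2 * k : ℕ) : ZMod (2 * k + 1))
        (pic k (i : ZMod (2 * k + 1)) 0, ((0, 0) : Cell), Dir.N) := by
      refine AntAux.phaseA hk i hi0 (by omega) (AntAux.Ev.cl i) (AntAux.Ev.cl i)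
        (fun _ => trivial) (fun _ => trivial) (fun _ => trivial) 0 0 _ (AntAux.init_inv i hi0) 0 ?_
      intro C' a hC'
      exact AntAux.ev_mid i hi0 hik 0 0 C' hC' _ _
    obtain ⟨t, h1, h2, h3, h4⟩ := h
    refine ⟨t, ?_, ?_, ?_, ?_⟩
    · rw [← Nat.cast_one (R := ZMod (2 * k + 1)), ← Nat.cast_add]
      exact h1
    · rw [← Nat.cast_one (R := ZMod (2 * k + 1)), ← Nat.cast_sub (show 1 ≤ i from hi0)]
      exact h2
    · exact h3
    · exact h4
  · rintro ⟨t, -, h2, h3, h4⟩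
    rw [← Nat.cast_one (R := ZMod (2 * k + 1)), ← Nat.cast_sub (show 1 ≤ i from hi0)] at h2
    have key := AntAux.safe_all (k := k)
      (S := fun a b => ¬ (a = ((i - 1 : ℕ) : ZMod (2 * k + 1)) ∧ b = (i : ZMod (2 * k + 1))))
      hk j hj0 (by omega)
      (fun a h => by
        have := (AntAux.cast_zero_iff (k := k) (v := i) (by omega)).1 h.2.symm
        omega)
      (fun a h => by
        have := AntAux.cast_inj (k := k) (by omega) (by omega) h.2
        omega)
      (fun a h => by
        have := AntAux.cast_inj (k := k) (by omega) (by omega) h.2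
        omega)
      (fun a h => by
        have := AntAux.cast_inj (k := k) (by omega) (by omega) h.2
        omega)
      (fun b h => by
        have := AntAux.cast_inj (k := k) (by omega) (by omega) h.1
        omega)
      (t + 1 + 3) j 0 0 _ 0 (Or.inl rfl) (AntAux.init_inv j hj0)
    exact AntAux.Saf.out (t + 1) _ _ _ key h4 ⟨h2, h3⟩
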